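/- Let R be a ring, C a big cotilting right R-module, and G the tilted abelian category (the heart of the cotilting t-structure on D(R)). Then C, viewed as an object of G, is an injective cogenerator of G; moreover, an object W ∈ G is injective in G if and only if W is, up to isomorphism, a direct summand of a product of copies of C. -/

import Mathlib

/-!
Statement 18: Let `R` be a ring, `C` a big cotilting module and `G` the heart of the cotilting
t-structure on `D(R)`.  Then `C` (viewed in `G`) is an injective cogenerator of `G`, and an
object `W ∈ G` is injective in `G` iff it is a direct summand of a product of copies of `C`.
(Injectivity is expressed by the lifting property against monomorphisms of `G`, and
cogeneration by the coseparating property, all inside the full subcategory `G ⊆ D(R)`.)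
-/

universe e w v u

open CategoryTheory Category Limits

namespace PaperStmt

variable {R : Type v} [Ring R]

/-- `M` belongs to `Prod C`: it is a direct summand of a product of copies of `C`. -/
def InProdOf (C M : ModuleCat.{v} R) : Prop :=
  ∃ (ι : Type v) (s : M ⟶ ∏ᶜ (fun _ : ι => C)) (r : (∏ᶜ (fun _ : ι => C)) ⟶ M),
    s ≫ r = 𝟙 M

/-- `C` has injective dimension at most `n`. -/
def InjDimLE (C : ModuleCat.{v} R) (n : ℕ) : Prop :=
  ∃ S : ComposableArrows (ModuleCat.{v} R) (n + 3),
    S.Exact ∧ IsZero (S.obj 0) ∧ IsZero (S.obj (Fin.last (n + 3))) ∧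
    Nonempty (S.obj ⟨1, by omega⟩ ≅ C) ∧
    ∀ (i : ℕ) (_ : 2 ≤ i) (_ : i ≤ n + 2), Injective (S.obj ⟨i, by omega⟩)

/-- `C` is a big `n`-cotilting module. -/
def IsBigNCotilting [HasExt.{e} (ModuleCat.{v} R)] (n : ℕ) (C : ModuleCat.{v} R) : Prop :=
  InjDimLE C n ∧
  (∀ (ι : Type v) (j : ℕ), 0 < j →
      Subsingleton (Abelian.Ext (∏ᶜ (fun _ : ι => C)) C j)) ∧
  (∃ (r : ℕ) (S : ComposableArrows (ModuleCat.{v} R) (r + 3)),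
    S.Exact ∧ IsZero (S.obj 0) ∧ IsZero (S.obj (Fin.last (r + 3))) ∧
    (∀ (i : ℕ) (_ : 1 ≤ i) (_ : i ≤ r + 1), InProdOf C (S.obj ⟨i, by omega⟩)) ∧
    Injective (S.obj ⟨r + 2, by omega⟩) ∧ IsCoseparator (S.obj ⟨r + 2, by omega⟩))

/-- `C` is a big cotilting module. -/
def IsBigCotilting [HasExt.{e} (ModuleCat.{v} R)] (C : ModuleCat.{v} R) : Prop :=
  ∃ n : ℕ, IsBigNCotilting n C

variable [HasDerivedCategory.{w} (ModuleCat.{v} R)]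

/-- Membership in the heart `G` of the cotilting t-structure. -/
def InHeart (C : ModuleCat.{v} R) (X : DerivedCategory (ModuleCat.{v} R)) : Prop :=
  ∀ i : ℤ, i ≠ 0 →
    ∀ f : X ⟶ (((DerivedCategory.singleFunctor (ModuleCat.{v} R) 0).obj C)⟦i⟧), f = 0

/-- A morphism between objects of the heart that is a monomorphism in the heart. -/
def HeartMono (C : ModuleCat.{v} R) {X Y : DerivedCategory (ModuleCat.{v} R)}
    (f : X ⟶ Y) : Prop :=
  InHeart C X ∧ InHeart C Y ∧
    ∀ (Z : DerivedCategory (ModuleCat.{v} R)), InHeart C Z →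
      ∀ g h : Z ⟶ X, g ≫ f = h ≫ f → g = h

/-- `W` is an injective object of the heart: it belongs to the heart, and morphisms into `W`
extend along monomorphisms of the heart. -/
def HeartInjective (C : ModuleCat.{v} R) (W : DerivedCategory (ModuleCat.{v} R)) : Prop :=
  InHeart C W ∧
    ∀ ⦃X Y : DerivedCategory (ModuleCat.{v} R)⦄ (f : X ⟶ Y), HeartMono C f →
      ∀ g : X ⟶ W, ∃ h : Y ⟶ W, f ≫ h = g

/-- `W` is a cogenerator (coseparator) of the heart. -/
def HeartCogen (C : ModuleCat.{v} R) (W : DerivedCategory (ModuleCat.{v} R)) : Prop :=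
  ∀ X Y : DerivedCategory (ModuleCat.{v} R), InHeart C X → InHeart C Y →
    ∀ f g : X ⟶ Y, (∀ h : Y ⟶ W, f ≫ h = g ≫ h) → f = g

end PaperStmt

open PaperStmt DerivedCategory

/-!
Write `c` for `C` placed in degree `0`. Since `C` has finite injective dimension, powers of `C` are
still products in the derived category, so every `X` has a weakly universal map to a power of `c`.
Since an injective cogenerator has a finite resolution by summands of powers of `C`, the homology of
`X` is controlled by the groups `Hom(X, Σⁱ c)`.

The kernel of a morphism `f : X ⟶ Y` of the heart is approximated from its fibre `F`, for which
`Hom(F, Σⁱ c)` vanishes unless `i` is `0` or `-1`. Passing to the fibre of a weakly universal map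
to a shifted power of `c` moves the degree `-1` to `-2`, without changing `Hom(F, c)`; iterating, it
becomes so negative that it only reflects homology in high degrees, which a truncation removes. This
gives a map `T ⟶ F` with `T` in the heart which induces a bijection on `Hom(-, c)`. If `f` is a
monomorphism of the heart, the composite `T ⟶ F ⟶ X` is zero, so maps from `X` to `c` vanish on `F`
and hence extend to `Y`: `c` is injective. If `f` is killed by all maps `Y ⟶ c`, then `T ⟶ F ⟶ X`
induces a bijection on `Hom(-, c)`, so it is an isomorphism and `f = 0`: `c` is a cogenerator. An
injective object then embeds into a power of `c`, the embedding splits, and the resulting idempotent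
already splits in the abelian category.
-/

namespace Cotilting

section Triangulated

open Pretriangulated

variable {D : Type u} [Category.{v} D] [HasShift D ℤ]

lemma exists_shift_comp_eq {c X : D} {a i j : ℤ} (h : j + a = i) (f : X⟦a⟧ ⟶ c⟦i⟧) :
    ∃ g : X ⟶ c⟦j⟧, g⟦a⟧' ≫ (shiftFunctorAdd' D j a i h).inv.app c = f := by
  obtain ⟨g, hg⟩ := (shiftFunctor D a).map_surjective (f ≫ (shiftFunctorAdd' D j a i h).hom.app c)
  exact ⟨g, by simp [hg]⟩

variable [Preadditive D]

/-- The vanishing of `Hom(X, Σⁱ c)`. -/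
def HomVanishes (c X : D) (i : ℤ) : Prop := ∀ f : X ⟶ c⟦i⟧, f = 0

/-- The objects `X` with `Hom(X, Σⁱ c) = 0` for all `i ≠ 0`. For a cotilting object `c` this is
the heart of the associated t-structure. -/
def heart (c : D) : ObjectProperty D := fun X => ∀ i : ℤ, i ≠ 0 → HomVanishes c X i

lemma HomVanishes.of_retract {c X Y : D} {i : ℤ} (h : HomVanishes c X i) (r : Retract Y X) :
    HomVanishes c Y i := fun f => by
  rw [← cancel_epi r.r, h (r.r ≫ f), comp_zero]

lemma homVanishes_zero_iff {c X : D} : HomVanishes c X 0 ↔ ∀ f : X ⟶ c, f = 0 := by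
  let e := (shiftFunctorZero D ℤ).app c
  refine ⟨fun h f => ?_, fun h f => ?_⟩
  · rw [← cancel_mono e.inv, zero_comp]
    exact h _
  · rw [← cancel_mono e.hom, zero_comp]
    exact h _

lemma bijective_comp_shift_of_isLocal {c X Y : D} (hX : heart c X) (hY : heart c Y) {f : X ⟶ Y}
    (hf : (ObjectProperty.singleton c).isLocal f) (i : ℤ) :
    Function.Bijective fun b : Y ⟶ c⟦i⟧ => f ≫ b := by
  obtain rfl | hi := eq_or_ne i 0
  · rw [← ObjectProperty.isoClosure_isLocal] at hf
    exact hf _ ⟨c, by simp, ⟨(shiftFunctorZero D ℤ).app c⟩⟩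
  · exact ⟨fun b b' _ => (hY i hi b).trans (hY i hi b').symm,
      fun a => ⟨0, comp_zero.trans (hX i hi a).symm⟩⟩

variable [∀ n : ℤ, (shiftFunctor D n).Additive]

lemma homVanishes_shift_iff {c X : D} {a i j : ℤ} (h : j + a = i) :
    HomVanishes c (X⟦a⟧) i ↔ HomVanishes c X j := by
  refine ⟨fun H g => ?_, fun H f => ?_⟩
  · apply (shiftFunctor D a).map_injective
    rw [← cancel_mono ((shiftFunctorAdd' D j a i h).inv.app c), H (g⟦a⟧' ≫ _), Functor.map_zero,
      zero_comp]
  · obtain ⟨g, rfl⟩ := exists_shift_comp_eq h f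
    rw [H g, Functor.map_zero, zero_comp]

/-- Every object has a weakly universal map to the heart with respect to maps to `c`. -/
def HasHeartPreenvelopes (c : D) : Prop :=
  ∀ X : D, ∃ (E : D) (u : X ⟶ E), heart c E ∧ ∀ g : X ⟶ c, ∃ e : E ⟶ c, u ≫ e = g

lemma HasHeartPreenvelopes.exists_shift {c : D} (hc : HasHeartPreenvelopes c) (X : D) (n : ℤ) :
    ∃ (E : D) (u : X ⟶ E), (∀ i : ℤ, i ≠ n → HomVanishes c E i) ∧
      ∀ g : X ⟶ c⟦n⟧, ∃ e : E ⟶ c⟦n⟧, u ≫ e = g := by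
  obtain ⟨E, u, hE, hu⟩ := hc (X⟦-n⟧)
  let e := (shiftFunctorCompIsoId D (-n) n (by lia)).app X
  refine ⟨E⟦n⟧, e.inv ≫ u⟦n⟧',
    fun i hi => (homVanishes_shift_iff (sub_add_cancel i n)).2 (hE _ (by lia)), fun g => ?_⟩
  obtain ⟨g', hg'⟩ := (shiftFunctor D n).map_surjective (e.hom ≫ g)
  obtain ⟨e', rfl⟩ := hu g'
  exact ⟨e'⟦n⟧', by rw [assoc, ← Functor.map_comp, hg', Iso.inv_hom_id_assoc]⟩

variable [HasZeroObject D] [Pretriangulated D]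

section Triangle

variable {c : D} {T : Triangle D} (hT : T ∈ distTriang D)
include hT

lemma exists_mor₁_comp_eq (h : ∀ f : T.obj₃⟦(-1 : ℤ)⟧ ⟶ c, f = 0) (a : T.obj₁ ⟶ c) :
    ∃ b : T.obj₂ ⟶ c, T.mor₁ ≫ b = a := by
  obtain ⟨b, hb⟩ := Triangle.yoneda_exact₂ _ (inv_rot_of_distTriang _ hT) a (h _)
  exact ⟨b, hb.symm⟩

lemma HomVanishes.obj₁ {i : ℤ} (h₂ : HomVanishes c T.obj₂ i) (h₃ : HomVanishes c T.obj₃ (i + 1)) :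
    HomVanishes c T.obj₁ i := fun a => by
  obtain ⟨b, rfl⟩ := exists_mor₁_comp_eq hT ((homVanishes_shift_iff (by lia)).2 h₃) a
  rw [h₂ b, comp_zero]

lemma homVanishes_obj₃_of_bijective
    (h : ∀ i : ℤ, Function.Bijective fun b : T.obj₂ ⟶ c⟦i⟧ => T.mor₁ ≫ b) (i : ℤ) :
    HomVanishes c T.obj₃ i := fun z => by
  have hz : T.mor₂ ≫ z = 0 := (h i).1 (by simp [comp_distTriang_mor_zero₁₂_assoc _ hT])
  obtain ⟨a, rfl⟩ := Triangle.yoneda_exact₃ _ hT z hz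
  obtain ⟨a, rfl⟩ := exists_shift_comp_eq (show i - 1 + 1 = i by lia) a
  obtain ⟨b, rfl⟩ := (h (i - 1)).2 a
  simp [comp_distTriang_mor_zero₃₁_assoc _ hT]

lemma isLocal_mor₁ (h₀ : ∀ z : T.obj₃ ⟶ c, T.mor₂ ≫ z = 0) (h₁ : HomVanishes c T.obj₃ 1) :
    (ObjectProperty.singleton c).isLocal T.mor₁ := by
  rintro _ ⟨-⟩
  refine ⟨fun b b' hb => ?_, exists_mor₁_comp_eq hT
    (homVanishes_zero_iff.1 ((homVanishes_shift_iff (by lia)).2 h₁))⟩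
  obtain ⟨z, hz⟩ := Triangle.yoneda_exact₂ _ hT (b - b') (by
    rw [Preadditive.comp_sub, sub_eq_zero]
    exact hb)
  rwa [h₀ z, sub_eq_zero] at hz

lemma isLocal_mor₁_of_homVanishes (h₀ : HomVanishes c T.obj₃ 0) (h₁ : HomVanishes c T.obj₃ 1) :
    (ObjectProperty.singleton c).isLocal T.mor₁ :=
  isLocal_mor₁ hT (fun z => by rw [homVanishes_zero_iff.1 h₀ z, comp_zero]) h₁

end Triangle

lemma isIso_of_isLocal {c : D} (hc : ∀ Z : D, (∀ i, HomVanishes c Z i) → IsZero Z) {X Y : D}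
    (hX : heart c X) (hY : heart c Y) {f : X ⟶ Y}
    (hf : (ObjectProperty.singleton c).isLocal f) : IsIso f := by
  obtain ⟨Z, g, h, hT⟩ := distinguished_cocone_triangle f
  exact (Triangle.isZero₃_iff_isIso₁ _ hT).1
    (hc Z (homVanishes_obj₃_of_bijective hT (bijective_comp_shift_of_isLocal hX hY hf)))

/-- Every object with `Hom(F, Σⁱ c)` concentrated in degrees `0` and `-1` receives a map from an
object of the heart that induces a bijection on `Hom(-, c)`. Applied to the fibre `F` of a morphism
of the heart, this plays the role of the kernel. -/
def HasHeartApproximations (c : D) : Prop :=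
  ∀ F : D, (∀ i : ℤ, i ≠ 0 → i ≠ -1 → HomVanishes c F i) →
    ∃ (T : D) (p : T ⟶ F), heart c T ∧ (ObjectProperty.singleton c).isLocal p

namespace HasHeartApproximations

variable {c : D} (hc : HasHeartApproximations c)
include hc

lemma exists_isLocal_fiber {X Y : D} (hX : heart c X) (hY : heart c Y) (f : X ⟶ Y) :
    ∃ (F T : D) (j : F ⟶ X) (δ : Y ⟶ F⟦(1 : ℤ)⟧) (p : T ⟶ F),
      Triangle.mk j f δ ∈ distTriang D ∧ heart c T ∧ (ObjectProperty.singleton c).isLocal p := by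
  obtain ⟨F, j, δ, hF⟩ := distinguished_cocone_triangle₁ f
  obtain ⟨T, p, hT, hp⟩ := hc F fun i h₀ h₁ => (hX i h₀).obj₁ hF (hY (i + 1) (by lia))
  exact ⟨F, T, j, δ, p, hF, hT, hp⟩

lemma injective (h : heart c c) : Injective (⟨c, h⟩ : (heart c).FullSubcategory) where
  factors {X Y} g f _ := by
    obtain ⟨F, T, j, δ, p, hF, hT, hp⟩ := hc.exists_isLocal_fiber X.2 Y.2 f.hom
    have hjf : j ≫ f.hom = 0 := comp_distTriang_mor_zero₁₂ _ hF
    have hpj : p ≫ j = 0 := by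
      have : (ObjectProperty.homMk (p ≫ j) : (⟨T, hT⟩ : (heart c).FullSubcategory) ⟶ X) =
          ObjectProperty.homMk 0 := by
        rw [← cancel_mono f]
        ext
        simp [hjf]
      exact congr_arg (·.hom) this
    have hjg : j ≫ g.hom = 0 := (hp c (by simp)).1 (by simp [reassoc_of% hpj])
    obtain ⟨k, hk⟩ := Triangle.yoneda_exact₂ _ hF g.hom hjg
    exact ⟨ObjectProperty.homMk k, by ext; exact hk.symm⟩

lemma isCoseparator (hc' : ∀ Z : D, (∀ i, HomVanishes c Z i) → IsZero Z) (h : heart c c) :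
    IsCoseparator (⟨c, h⟩ : (heart c).FullSubcategory) := by
  refine (Preadditive.isCoseparator_iff _).2 fun X Y f hf => ?_
  obtain ⟨F, T, j, δ, p, hF, hT, hp⟩ := hc.exists_isLocal_fiber X.2 Y.2 f.hom
  have hj : (ObjectProperty.singleton c).isLocal j :=
    isLocal_mor₁ hF (fun z => congr_arg (·.hom) (hf (ObjectProperty.homMk z)))
      (Y.2 1 one_ne_zero)
  have : IsIso (p ≫ j) := isIso_of_isLocal hc' hT X.2 (MorphismProperty.comp_mem _ _ _ hp hj)
  have hjf : j ≫ f.hom = 0 := comp_distTriang_mor_zero₁₂ _ hF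
  ext
  simp [← cancel_epi (p ≫ j), hjf]

end HasHeartApproximations

namespace HasHeartPreenvelopes

variable {c : D} (hc : HasHeartPreenvelopes c)
include hc

lemma exists_isLocal_pred {Y : D} {n : ℤ} (hn : n < 0)
    (hY : ∀ i : ℤ, i ≠ 0 → i ≠ n → HomVanishes c Y i) :
    ∃ (Y' : D) (p : Y' ⟶ Y), (∀ i : ℤ, i ≠ 0 → i ≠ n - 1 → HomVanishes c Y' i) ∧
      (ObjectProperty.singleton c).isLocal p := by
  obtain ⟨E, u, hE, hu⟩ := hc.exists_shift Y n
  obtain ⟨Y', f, δ, hT⟩ := distinguished_cocone_triangle₁ u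
  refine ⟨Y', f, fun i h₀ hi => ?_,
    isLocal_mor₁_of_homVanishes hT (hE 0 (by lia)) (hE 1 (by lia))⟩
  obtain rfl | hin := eq_or_ne i n
  · intro a
    obtain ⟨b, rfl⟩ :=
      exists_mor₁_comp_eq hT ((homVanishes_shift_iff (by lia)).2 (hE (i + 1) (by lia))) a
    obtain ⟨b, rfl⟩ := hu b
    exact (comp_distTriang_mor_zero₁₂_assoc _ hT b).trans zero_comp
  · exact (hY i h₀ hin).obj₁ hT (hE (i + 1) (by lia))

lemma exists_isLocal {F : D} (hF : ∀ i : ℤ, i ≠ 0 → i ≠ -1 → HomVanishes c F i) (k : ℕ) :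
    ∃ (Y : D) (p : Y ⟶ F), (∀ i : ℤ, i ≠ 0 → i ≠ -1 - k → HomVanishes c Y i) ∧
      (ObjectProperty.singleton c).isLocal p := by
  induction k with
  | zero => exact ⟨F, 𝟙 F, by simpa using hF, MorphismProperty.id_mem _ _⟩
  | succ k ih =>
    obtain ⟨Y, p, hY, hp⟩ := ih
    obtain ⟨Y', q, hY', hq⟩ := hc.exists_isLocal_pred (by lia) hY
    exact ⟨Y', q ≫ p, fun i h₀ hi => hY' i h₀ (by push_cast at hi; lia),
      MorphismProperty.comp_mem _ _ _ hq hp⟩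

end HasHeartPreenvelopes

end Triangulated

section TriangleProducts

open Pretriangulated

lemma nonempty_isLimit_fan_mk_iff {D : Type*} [Category* D] {ι : Type*} {F : ι → D} {P : D}
    (p : ∀ a, P ⟶ F a) :
    Nonempty (IsLimit (Fan.mk P p)) ↔
      ∀ X, Function.Bijective fun (x : X ⟶ P) (a : ι) => x ≫ p a := by
  refine ⟨fun ⟨h⟩ X => ⟨fun x y hxy => Fan.IsLimit.hom_ext h _ _ (congr_fun hxy), fun x =>
    ⟨Fan.IsLimit.lift h x, funext (Fan.IsLimit.fac h x)⟩⟩, fun h => ?_⟩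
  choose lift hlift using fun s : Fan F => (h s.pt).surjective s.proj
  exact ⟨Fan.IsLimit.mk _ lift (fun s => congr_fun (hlift s)) fun s m hm =>
    (h s.pt).injective ((funext hm).trans (hlift s).symm)⟩

lemma exact_rightComp {D : Type*} [Category* D] [Preadditive D] {X P₁ P₂ P₃ : D} {f : P₁ ⟶ P₂}
    {g : P₂ ⟶ P₃} (w : f ≫ g = 0)
    (h : ∀ x : X ⟶ P₂, x ≫ g = 0 → ∃ y, x = y ≫ f) :
    Function.Exact (Preadditive.rightComp X f) (Preadditive.rightComp X g) := fun x =>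
  ⟨fun hx => (h x hx).imp fun _ => Eq.symm, by rintro ⟨y, rfl⟩; simp [Preadditive.rightComp, w]⟩

lemma exact_piMap {ι : Type*} {M₁ M₂ M₃ : ι → Type*} [∀ a, Zero (M₃ a)]
    {f : ∀ a, M₁ a → M₂ a} {g : ∀ a, M₂ a → M₃ a} (h : ∀ a, Function.Exact (f a) (g a)) :
    Function.Exact (Pi.map f) (Pi.map g) := fun x =>
  ⟨fun hx => ⟨fun a => ((h a _).1 (congr_fun hx a)).choose,
    funext fun a => ((h a _).1 (congr_fun hx a)).choose_spec⟩,
    by rintro ⟨y, rfl⟩; exact funext fun a => (h a).apply_apply_eq_zero _⟩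

variable {D : Type*} [Category* D] [Preadditive D] [HasZeroObject D] [HasShift D ℤ]
  [∀ n : ℤ, (shiftFunctor D n).Additive] [Pretriangulated D]
  {ι : Type*} {T : Triangle D} {T' : ι → Triangle D} (φ : ∀ a, T ⟶ T' a)
  (hT : T ∈ distTriang D) (hT' : ∀ a, T' a ∈ distTriang D)

include hT hT' in
lemma nonempty_isLimit_fan_mk_hom₃
    (h₁ : Nonempty (IsLimit (Fan.mk T.obj₁ fun a => (φ a).hom₁)))
    (h₂ : Nonempty (IsLimit (Fan.mk T.obj₂ fun a => (φ a).hom₂))) :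
    Nonempty (IsLimit (Fan.mk T.obj₃ fun a => (φ a).hom₃)) := by
  have shift {F : ι → D} {P : D} {p : ∀ a, P ⟶ F a} (h : Nonempty (IsLimit (Fan.mk P p))) :
      Nonempty (IsLimit (Fan.mk (P⟦(1 : ℤ)⟧) fun a => (p a)⟦(1 : ℤ)⟧')) :=
    h.map (isLimitFanMkObjOfIsLimit (shiftFunctor D (1 : ℤ)) _ _)
  have h₁' := shift h₁
  have h₂' := shift h₂
  rw [nonempty_isLimit_fan_mk_iff] at *
  intro X
  let i {F : ι → D} {P : D} (p : ∀ a, P ⟶ F a) : (X ⟶ P) →+ ∀ a, X ⟶ F a :=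
    AddMonoidHom.pi fun a => Preadditive.rightComp X (p a)
  let r {P₁ P₂ : ι → D} (f : ∀ a, P₁ a ⟶ P₂ a) : (∀ a, X ⟶ P₁ a) →+ ∀ a, X ⟶ P₂ a :=
    AddMonoidHom.piMap fun a => Preadditive.rightComp X (f a)
  have comm {F₁ F₂ : ι → D} {P₁ P₂ : D} {p₁ : ∀ a, P₁ ⟶ F₁ a} {p₂ : ∀ a, P₂ ⟶ F₂ a}
      {f : P₁ ⟶ P₂} {f' : ∀ a, F₁ a ⟶ F₂ a} (h : ∀ a, f ≫ p₂ a = p₁ a ≫ f' a) :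
      (r f').comp (i p₁) = (i p₂).comp (Preadditive.rightComp X f) := by
    ext x a
    exact (assoc x _ _).trans ((congr_arg (x ≫ ·) (h a).symm).trans (assoc _ _ _).symm)
  exact AddMonoidHom.bijective_of_surjective_of_bijective_of_bijective_of_injective
    (Preadditive.rightComp X T.mor₁) (Preadditive.rightComp X T.mor₂)
    (Preadditive.rightComp X T.mor₃) (Preadditive.rightComp X (T.mor₁⟦(1 : ℤ)⟧'))
    (r fun a => (T' a).mor₁) (r fun a => (T' a).mor₂) (r fun a => (T' a).mor₃)
    (r fun a => (T' a).mor₁⟦(1 : ℤ)⟧') (i fun a => (φ a).hom₁) (i fun a => (φ a).hom₂)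
    (i fun a => (φ a).hom₃) (i fun a => (φ a).hom₁⟦(1 : ℤ)⟧') (i fun a => (φ a).hom₂⟦(1 : ℤ)⟧')
    (comm fun a => (φ a).comm₁) (comm fun a => (φ a).comm₂) (comm fun a => (φ a).comm₃)
    (comm fun a => by simp only [← Functor.map_comp, (φ a).comm₁])
    (exact_rightComp (comp_distTriang_mor_zero₁₂ _ hT) (Triangle.coyoneda_exact₂ _ hT))
    (exact_rightComp (comp_distTriang_mor_zero₂₃ _ hT) (Triangle.coyoneda_exact₃ _ hT))
    (exact_rightComp (comp_distTriang_mor_zero₃₁ _ hT) (Triangle.coyoneda_exact₁ _ hT))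
    (exact_piMap fun a => exact_rightComp (comp_distTriang_mor_zero₁₂ _ (hT' a))
      (Triangle.coyoneda_exact₂ _ (hT' a)))
    (exact_piMap fun a => exact_rightComp (comp_distTriang_mor_zero₂₃ _ (hT' a))
      (Triangle.coyoneda_exact₃ _ (hT' a)))
    (exact_piMap fun a => exact_rightComp (comp_distTriang_mor_zero₃₁ _ (hT' a))
      (Triangle.coyoneda_exact₁ _ (hT' a)))
    (h₁ X).surjective (h₂ X) (h₁' X) (h₂' X).injective

include hT hT' in
lemma nonempty_isLimit_fan_mk_hom₁
    (h₂ : Nonempty (IsLimit (Fan.mk T.obj₂ fun a => (φ a).hom₂)))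
    (h₃ : Nonempty (IsLimit (Fan.mk T.obj₃ fun a => (φ a).hom₃))) :
    Nonempty (IsLimit (Fan.mk T.obj₁ fun a => (φ a).hom₁)) :=
  (nonempty_isLimit_fan_mk_hom₃ (fun a => (rotate D).map (φ a)) (rot_of_distTriang _ hT)
    (fun a => rot_of_distTriang _ (hT' a)) h₂ h₃).map
    (isLimitOfIsLimitFanMkObj (shiftFunctor D (1 : ℤ)) _ _)

end TriangleProducts

section HomDominates

open Pretriangulated

variable {D : Type u} [Category.{v} D] [Preadditive D] [HasShift D ℤ] {c m X : D} {l : ℕ}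

/-- The vanishing of `Hom(X, Σʲ c)` for `0 ≤ j < l` forces that of `Hom(X, m)`. This holds when
`m` has a resolution of length less than `l` by retracts of powers of `c`. -/
def HomDominates (c m : D) (l : ℕ) : Prop :=
  ∀ X : D, (∀ j : ℤ, 0 ≤ j → j < l → HomVanishes c X j) → HomVanishes m X 0

lemma HomVanishes.of_target_retract {m' : D} (r : Retract m' m) (h : HomVanishes m X 0) :
    HomVanishes m' X 0 := homVanishes_zero_iff.2 fun f => by
  rw [← comp_id f, ← r.retract, ← assoc, homVanishes_zero_iff.1 h (f ≫ r.i), zero_comp]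

namespace HomDominates

lemma of_isZero (hm : IsZero m) : HomDominates c m 0 :=
  fun _ _ => homVanishes_zero_iff.2 fun f => hm.eq_of_tgt f 0

lemma of_retract {m' : D} (h : HomDominates c m l) (r : Retract m' m) : HomDominates c m' l :=
  fun X hX => (h X hX).of_target_retract r

lemma of_isLimit_fan {ι : Type*} {p : ι → (m ⟶ c)} (hm : IsLimit (Fan.mk m p)) :
    HomDominates c m 1 := fun _ hX => homVanishes_zero_iff.2 fun f =>
  Fan.IsLimit.hom_ext hm _ _ fun a => by
    rw [zero_comp]
    exact homVanishes_zero_iff.1 (hX 0 le_rfl (by simp)) _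

variable [∀ n : ℤ, (shiftFunctor D n).Additive]

lemma homVanishes (h : HomDominates c m l) {i : ℤ}
    (hX : ∀ j : ℤ, i ≤ j → j < l + i → HomVanishes c X j) : HomVanishes m X i :=
  (homVanishes_shift_iff (add_neg_cancel i)).1 (h _ fun j h₀ hl =>
    (homVanishes_shift_iff (add_neg_cancel_right j i)).2 (hX (j + i) (by lia) (by lia)))

end HomDominates

variable [∀ n : ℤ, (shiftFunctor D n).Additive] [HasZeroObject D] [Pretriangulated D]
  {T : Triangle D} (hT : T ∈ distTriang D)
include hT

lemma HomVanishes.target_obj₁ {i : ℤ} (h₂ : HomVanishes T.obj₂ X (i + 1))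
    (h₃ : HomVanishes T.obj₃ X i) : HomVanishes T.obj₁ X (i + 1) := by
  rw [← homVanishes_shift_iff (show i + 1 + -i = 1 by lia)] at h₂ ⊢
  rw [← homVanishes_shift_iff (add_neg_cancel i), homVanishes_zero_iff] at h₃
  intro f
  obtain ⟨y, rfl⟩ := Triangle.coyoneda_exact₁ _ hT f (h₂ _)
  rw [h₃ y, zero_comp]

lemma HomDominates.obj₃ (h₁ : HomDominates c T.obj₁ l) (h₂ : HomDominates c T.obj₂ 1) :
    HomDominates c T.obj₃ (l + 1) := fun X hX => homVanishes_zero_iff.2 fun f => by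
  have hf : f ≫ T.mor₃ = 0 :=
    h₁.homVanishes (fun j h hj => hX j (by lia) (by push_cast; lia)) _
  obtain ⟨y, rfl⟩ := Triangle.coyoneda_exact₃ _ hT f hf
  have hy := h₂ X fun j h hj => hX j h (by push_cast at *; lia)
  rw [homVanishes_zero_iff.1 hy y, zero_comp]

end HomDominates

section DerivedHom

variable {A : Type u} [Category.{v} A] [Abelian A]

section Complexes

open HomologicalComplex CochainComplex.HomComplex

variable {K : CochainComplex A ℤ} {J : A}

lemma nonempty_homotopy_zero_of_eq_d_comp (φ : K ⟶ (CochainComplex.singleFunctor A 0).obj J)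
    (ψ : K.X 1 ⟶ J) (h : φ.f 0 ≫ (singleObjXSelf (.up ℤ) 0 J).hom = K.d 0 1 ≫ ψ) :
    Nonempty (Homotopy φ 0) := by
  refine ⟨(Cochain.equivHomotopy φ 0).symm
    ⟨Cochain.toSingleMk ψ (show (1 : ℤ) + -1 = 0 by simp), ?_⟩⟩
  apply (Cochain.toSingleEquiv (show (0 : ℤ) + 0 = 0 by simp)).injective
  rw [Cochain.δ_toSingleMk _ _ 0 0 (by simp), ← h]
  simp only [Cochain.toSingleEquiv, AddEquiv.coe_mk, Equiv.coe_fn_mk, Cochain.ofHom_v,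
    Int.negOnePow_zero, one_smul, Cochain.ofHom_zero, add_zero, Cochain.toSingleMk_v]
  exact ((Iso.eq_comp_inv _).1 rfl).symm

lemma homologyMap_comp_singleObjHomologySelfIso_hom
    (φ : K ⟶ (single A (.up ℤ) 0).obj J) (γ : K.opcycles 0 ⟶ J)
    (h : φ.f 0 ≫ (singleObjXSelf (.up ℤ) 0 J).hom = K.pOpcycles 0 ≫ γ) :
    homologyMap φ 0 ≫ (singleObjHomologySelfIso (.up ℤ) 0 J).hom = K.homologyι 0 ≫ γ := by
  have hγ : opcyclesMap φ 0 ≫ (singleObjOpcyclesSelfIso (.up ℤ) 0 J).inv = γ := by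
    rw [← cancel_epi (K.pOpcycles 0), p_opcyclesMap_assoc, ← h]
    simp
  rw [← hγ, ← homologyι_naturality_assoc, homologyι_singleObjOpcyclesSelfIso_inv]

variable [Injective J]

lemma nonempty_homotopy_zero_of_homologyMap_eq_zero
    (φ : K ⟶ (single A (.up ℤ) 0).obj J) (hφ : homologyMap φ 0 = 0) :
    Nonempty (Homotopy φ 0) := by
  let γ : K.opcycles 0 ⟶ J := K.descOpcycles (φ.f 0 ≫ (singleObjXSelf (.up ℤ) 0 J).hom) (-1)
    (by simp) (by rw [← φ.comm_assoc]; simp)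
  have hγ : φ.f 0 ≫ (singleObjXSelf (.up ℤ) 0 J).hom = K.pOpcycles 0 ≫ γ := by simp [γ]
  have hex : (ShortComplex.mk (K.homologyι 0) (K.fromOpcycles 0 1) (by simp)).Exact :=
    ShortComplex.exact_of_f_is_kernel _ (K.homologyIsKernel 0 1 (by simp))
  have hι : K.homologyι 0 ≫ γ = 0 := by
    rw [← homologyMap_comp_singleObjHomologySelfIso_hom φ γ hγ, hφ, zero_comp]
  have hψ : K.pOpcycles 0 ≫ γ = K.d 0 1 ≫ hex.descToInjective γ hι := by
    rw [← K.p_fromOpcycles 0 1, assoc]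
    exact congr_arg _ (hex.comp_descToInjective γ hι).symm
  exact nonempty_homotopy_zero_of_eq_d_comp φ _ (hγ.trans hψ)

lemma homologyMap_singleFunctor_surjective :
    Function.Surjective fun φ : K ⟶ (single A (.up ℤ) 0).obj J =>
      homologyMap φ 0 := fun β => by
  let γ : K.opcycles 0 ⟶ J :=
    Injective.factorThru (β ≫ (singleObjHomologySelfIso (.up ℤ) 0 J).hom) (K.homologyι 0)
  let φ : K ⟶ (single A (.up ℤ) 0).obj J :=
    mkHomToSingle (K.pOpcycles 0 ≫ γ) (by simp)
  have hφ : φ.f 0 ≫ (singleObjXSelf (.up ℤ) 0 J).hom = K.pOpcycles 0 ≫ γ := by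
    simp [φ]
  refine ⟨φ, (cancel_mono (singleObjHomologySelfIso (.up ℤ) 0 J).hom).1 ?_⟩
  exact (homologyMap_comp_singleObjHomologySelfIso_hom φ γ hφ).trans (Injective.comp_factorThru _ _)

instance isKInjective_singleFunctor : CochainComplex.IsKInjective ((single A (.up ℤ) 0).obj J) := by
  have : CochainComplex.IsStrictlyGE ((single A (.up ℤ) 0).obj J) 0 :=
    inferInstanceAs (CochainComplex.IsStrictlyGE ((CochainComplex.singleFunctor A 0).obj J) 0)
  have : ∀ i, Injective (((single A (.up ℤ) 0).obj J).X i) := fun i => by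
    obtain rfl | hi := eq_or_ne i 0
    · exact Injective.of_iso (singleObjXSelf (.up ℤ) 0 J).symm ‹_›
    · exact (isZero_single_obj_X (.up ℤ) 0 J i hi).injective
  exact CochainComplex.isKInjective_of_injective _ 0

end Complexes

variable [HasDerivedCategory.{w} A]

lemma Q_map_surjective (K L : CochainComplex A ℤ) [L.IsKInjective] :
    Function.Surjective (Q.map : (K ⟶ L) → (Q.obj K ⟶ Q.obj L)) := fun f => by
  obtain ⟨g, hg⟩ := (CochainComplex.IsKInjective.Qh_map_bijective
    ((HomotopyCategory.quotient _ _).obj K) L).surjective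
      ((quotientCompQhIso A).hom.app K ≫ f ≫ (quotientCompQhIso A).inv.app L)
  obtain ⟨φ, rfl⟩ := (HomotopyCategory.quotient _ _).map_surjective g
  refine ⟨φ, ?_⟩
  have := (quotientCompQhIso A).hom.naturality φ
  rw [← cancel_epi ((quotientCompQhIso A).hom.app K), ← this, Functor.comp_map, hg]
  simp

instance small_hom_singleFunctor [EnoughInjectives A] (X : DerivedCategory A) (M : A) :
    Small.{v} (X ⟶ (singleFunctor A 0).obj M) := by
  obtain ⟨R⟩ := HasInjectiveResolutions.out (C := A) M
  obtain ⟨R⟩ := R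
  have : R.cochainComplex.IsKInjective := CochainComplex.isKInjective_of_injective _ 0
  let e : (Q.obj (Q.objPreimage X) ⟶ Q.obj R.cochainComplex) ≃
      (X ⟶ (singleFunctor A 0).obj M) :=
    Iso.homCongr (Q.objObjPreimageIso X) (asIso (Q.map R.ι')).symm
  exact small_of_surjective (e.surjective.comp (Q_map_surjective _ _))

variable {J : A} [Injective J]

lemma homologyFunctor_map_Q_bijective (K : CochainComplex A ℤ) :
    Function.Bijective
      fun f : Q.obj K ⟶ Q.obj ((HomologicalComplex.single A (.up ℤ) 0).obj J) =>
        (homologyFunctor A 0).map f := by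
  let i (L : CochainComplex A ℤ) :
      (homologyFunctor A 0).obj (Q.obj L) ≅ HomologicalComplex.homology L 0 :=
    (homologyFunctorFactors A 0).app L
  have hi {L : CochainComplex A ℤ} (φ : K ⟶ L) : (homologyFunctor A 0).map (Q.map φ) =
      (i K).hom ≫ HomologicalComplex.homologyMap φ 0 ≫ (i L).inv := by
    rw [← assoc, Iso.eq_comp_inv]
    exact homologyFunctorFactors_hom_naturality φ 0
  constructor
  · refine (injective_iff_map_eq_zero (homologyFunctor A 0).mapAddHom).2 fun f hf => ?_
    obtain ⟨φ, rfl⟩ := Q_map_surjective _ _ f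
    replace hf := (hi φ).symm.trans hf
    obtain ⟨h⟩ := nonempty_homotopy_zero_of_homologyMap_eq_zero φ (by
      simpa only [Preadditive.IsIso.comp_left_eq_zero, Preadditive.IsIso.comp_right_eq_zero]
        using hf)
    exact (Q_map_eq_of_homotopy _ h).trans (Q.map_zero _ _)
  · intro α
    obtain ⟨φ, hφ⟩ := homologyMap_singleFunctor_surjective (((i _).inv ≫ α) ≫ (i _).hom)
    exact ⟨Q.map φ, (hi φ).trans ((Iso.eq_inv_comp _).1 ((Iso.comp_inv_eq _).2 hφ))⟩

lemma homologyFunctor_map_singleFunctor_bijective (X : DerivedCategory A) :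
    Function.Bijective
      fun f : X ⟶ (singleFunctor A 0).obj J => (homologyFunctor A 0).map f := by
  let e := Q.objObjPreimageIso X
  let e' := (homologyFunctor A 0).mapIso e
  have h := homologyFunctor_map_Q_bijective (J := J) (Q.objPreimage X)
  have hcomp : (fun f : X ⟶ (singleFunctor A 0).obj J => (homologyFunctor A 0).map f) =
      (e'.homFromEquiv ∘ (homologyFunctor A 0).map) ∘ e.homFromEquiv.symm := by
    funext f
    exact e'.eq_inv_comp.2 ((homologyFunctor A 0).map_comp e.hom f).symm
  rw [hcomp]
  exact (e'.homFromEquiv.bijective.comp h).comp e.homFromEquiv.symm.bijective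

end DerivedHom

section InjectiveDimension

variable {A : Type u} [Category.{v} A] [Abelian A]

lemma shortExact_injective_under [EnoughInjectives A] (M : A) :
    (ShortComplex.mk (Injective.ι M) (cokernel.π (Injective.ι M)) (by simp)).ShortExact where
  exact := ShortComplex.exact_cokernel _

theorem injectiveDimension_induction [EnoughInjectives A] {P : A → ℕ → Prop}
    (injective : ∀ J, Injective J → P J 0)
    (shortExact : ∀ (S : ShortComplex A) (n : ℕ), S.ShortExact → Injective S.X₂ →
      P S.X₃ n → P S.X₁ (n + 1))
    {M : A} {n : ℕ} (hM : HasInjectiveDimensionLT M (n + 1)) : P M n := by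
  induction n generalizing M with
  | zero => exact injective _ (injective_iff_hasInjectiveDimensionLT_one.2 hM)
  | succ n ih =>
    have hS := shortExact_injective_under M
    have : Injective (Injective.under M) := inferInstance
    exact shortExact _ _ hS this (ih ((hS.hasInjectiveDimensionLT_X₃_iff n this).2 hM))

end InjectiveDimension

section Powers

variable {A : Type u} [Category.{v} A] [Abelian A] [HasProducts.{v} A] (ι : Type v)
  (S : ShortComplex A)

/-- The termwise power of a short complex. -/
noncomputable abbrev powShortComplex : ShortComplex A where
  X₁ := ∏ᶜ fun _ : ι => S.X₁
  X₂ := ∏ᶜ fun _ : ι => S.X₂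
  X₃ := ∏ᶜ fun _ : ι => S.X₃
  f := Limits.Pi.map fun _ => S.f
  g := Limits.Pi.map fun _ => S.g
  zero := Pi.hom_ext _ _ fun _ => by simp

/-- The projections from a termwise power of a short complex. -/
noncomputable abbrev powShortComplexπ (a : ι) : powShortComplex ι S ⟶ S where
  τ₁ := Pi.π (fun _ : ι => S.X₁) a
  τ₂ := Pi.π (fun _ : ι => S.X₂) a
  τ₃ := Pi.π (fun _ : ι => S.X₃) a

variable {S}

lemma powShortComplex_shortExact [AB4Star A] (hS : S.ShortExact) :
    (powShortComplex ι S).ShortExact := by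
  have := hS.mono_f
  have := hS.epi_g
  have : Mono (powShortComplex ι S).f := inferInstanceAs (Mono (Limits.Pi.map fun _ : ι => S.f))
  let g : Discrete.functor (fun _ : ι => S.X₂) ⟶ Discrete.functor fun _ : ι => S.X₃ :=
    Discrete.natTrans fun _ => S.g
  have : ∀ j, Epi (g.app j) := fun _ => hS.epi_g
  have : Epi g := NatTrans.epi_of_epi_app _
  have : Epi (powShortComplex ι S).g := inferInstanceAs (Epi (lim.map g))
  refine ⟨ShortComplex.exact_of_f_is_kernel _ (KernelFork.IsLimit.ofι' _ _ fun {W} k hk =>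
    ⟨Pi.lift fun a => hS.exact.lift (k ≫ Pi.π _ a) ?_, Pi.hom_ext _ _ fun a => ?_⟩)⟩
  · simpa using hk =≫ Pi.π _ a
  · simp

variable [HasDerivedCategory.{w} A]

lemma nonempty_isLimit_fan_singleFunctor_of_injective (J : A) [Injective J] :
    Nonempty (IsLimit (Fan.mk ((singleFunctor A 0).obj (∏ᶜ fun _ : ι => J))
      fun a => (singleFunctor A 0).map (Pi.π (fun _ : ι => J) a))) := by
  let e := singleFunctorCompHomologyFunctorIso A 0
  have hH : Nonempty (IsLimit (Fan.mk ((homologyFunctor A 0).obj ((singleFunctor A 0).obj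
      (∏ᶜ fun _ : ι => J))) fun a => (homologyFunctor A 0).map
        ((singleFunctor A 0).map (Pi.π (fun _ : ι => J) a)))) := by
    have : PreservesLimit (Discrete.functor fun _ : ι => J)
        (singleFunctor A 0 ⋙ homologyFunctor A 0) := preservesLimit_of_natIso _ e.symm
    exact ⟨isLimitFanMkObjOfIsLimit (singleFunctor A 0 ⋙ homologyFunctor A 0) _ _
      (productIsProduct fun _ : ι => J)⟩
  rw [nonempty_isLimit_fan_mk_iff] at hH ⊢
  intro X
  have hJ := homologyFunctor_map_singleFunctor_bijective (J := J) X
  have hP := homologyFunctor_map_singleFunctor_bijective (J := ∏ᶜ fun _ : ι => J) X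
  refine (Function.Bijective.piMap fun _ : ι => hJ).of_comp_iff' _ |>.1 ?_
  convert (hH ((homologyFunctor A 0).obj X)).comp hP using 1
  ext x a
  exact (homologyFunctor A 0).map_comp x _

theorem nonempty_isLimit_fan_singleFunctor [EnoughInjectives A] [AB4Star A] {M : A} {n : ℕ}
    (hM : HasInjectiveDimensionLT M (n + 1)) :
    Nonempty (IsLimit (Fan.mk ((singleFunctor A 0).obj (∏ᶜ fun _ : ι => M))
      fun a => (singleFunctor A 0).map (Pi.π (fun _ : ι => M) a))) := by
  refine injectiveDimension_induction (P := fun M _ => Nonempty (IsLimit (Fan.mk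
      ((singleFunctor A 0).obj (∏ᶜ fun _ : ι => M))
        fun a => (singleFunctor A 0).map (Pi.π (fun _ : ι => M) a))))
    (fun J _ => nonempty_isLimit_fan_singleFunctor_of_injective ι J)
    (fun S _ hS _ ih => ?_) hM
  have hP := powShortComplex_shortExact ι hS
  exact nonempty_isLimit_fan_mk_hom₁
    (fun a => ShortComplex.ShortExact.singleTriangle.map hP hS (powShortComplexπ ι S a))
    hP.singleTriangle_distinguished (fun _ => hS.singleTriangle_distinguished)
    (nonempty_isLimit_fan_singleFunctor_of_injective ι S.X₂) ih

end Powers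

section Homology

variable {A : Type u} [Category.{v} A] [Abelian A] [HasDerivedCategory.{w} A]
  {C M Q : A} {X : DerivedCategory A} {n l : ℕ} {i : ℤ}

lemma isZero_of_isZero_homology (h : ∀ i, IsZero ((homologyFunctor A i).obj X)) : IsZero X := by
  have : IsIso (0 : X ⟶ X) := (DerivedCategory.isIso_iff A _).2 fun n =>
    isIso_of_source_target_iso_zero _ (h n).isoZero (h n).isoZero
  exact (IsZero.iff_id_eq_zero X).2 (isIsoZeroSelfEquiv X this)

lemma isZero_homology_shift_iff {a j : ℤ} (h : a + i = j) :
    IsZero ((homologyFunctor A i).obj (X⟦a⟧)) ↔ IsZero ((homologyFunctor A j).obj X) :=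
  (((homologyFunctor A 0).shiftIso a i j h).app X).isZero_iff

lemma homVanishes_singleFunctor_of_injective [Injective M]
    (hX : IsZero ((homologyFunctor A (-i)).obj X)) :
    HomVanishes ((singleFunctor A 0).obj M) X i := by
  rw [← homVanishes_shift_iff (add_neg_cancel i), homVanishes_zero_iff]
  exact fun f => (homologyFunctor_map_singleFunctor_bijective _).injective
    (((isZero_homology_shift_iff (add_zero (-i))).2 hX).eq_of_src _ _)

theorem homVanishes_singleFunctor [EnoughInjectives A] (hM : HasInjectiveDimensionLT M (n + 1))
    (hX : ∀ j : ℤ, -i ≤ j → j ≤ n - i → IsZero ((homologyFunctor A j).obj X)) :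
    HomVanishes ((singleFunctor A 0).obj M) X i := by
  refine injectiveDimension_induction (P := fun M n => ∀ i : ℤ,
    (∀ j : ℤ, -i ≤ j → j ≤ n - i → IsZero ((homologyFunctor A j).obj X)) →
      HomVanishes ((singleFunctor A 0).obj M) X i) (fun J _ i hX => ?_)
    (fun S n hS _ ih i hX => ?_) hM i hX
  · exact homVanishes_singleFunctor_of_injective (hX _ le_rfl (by simp))
  · obtain ⟨i, rfl⟩ : ∃ k, i = k + 1 := ⟨i - 1, by lia⟩
    exact HomVanishes.target_obj₁ hS.singleTriangle_distinguished
      (homVanishes_singleFunctor_of_injective (hX _ le_rfl (by lia)))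
      (ih i fun j h₁ h₂ => hX j (by lia) (by push_cast; lia))

lemma homVanishes_singleFunctor_obj [EnoughInjectives A]
    (hC : HasInjectiveDimensionLT C (n + 1)) (M : A) (hi : i < 0) :
    HomVanishes ((singleFunctor A 0).obj C) ((singleFunctor A 0).obj M) i :=
  homVanishes_singleFunctor hC fun _ _ _ => isZero_of_isLE _ 0 _ (by lia)

lemma heart_singleFunctor [HasExt.{e} A] [EnoughInjectives A]
    (hC : HasInjectiveDimensionLT C (n + 1))
    (hM : ∀ j : ℕ, 0 < j → Subsingleton (Abelian.Ext M C j)) :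
    heart ((singleFunctor A 0).obj C) ((singleFunctor A 0).obj M) := fun i hi f => by
  obtain hi' | hi' := lt_or_ge i 0
  · exact homVanishes_singleFunctor_obj hC M hi' f
  · lift i to ℕ using hi'
    have := hM i (by lia)
    exact Abelian.Ext.homEquiv.symm.injective (Subsingleton.elim _ _)

lemma exists_hom_singleFunctor_pow [EnoughInjectives A] [HasProducts.{v} A] [AB4Star A]
    (hC : HasInjectiveDimensionLT C (n + 1)) (X : DerivedCategory A) :
    ∃ (ι : Type v) (u : X ⟶ (singleFunctor A 0).obj (∏ᶜ fun _ : ι => C)),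
      ∀ g : X ⟶ (singleFunctor A 0).obj C, ∃ e, u ≫ e = g := by
  let ι := Shrink.{v} (X ⟶ (singleFunctor A 0).obj C)
  obtain ⟨hl⟩ := nonempty_isLimit_fan_singleFunctor ι hC
  exact ⟨ι, Fan.IsLimit.lift hl (equivShrink _).symm, fun g => ⟨_,
    (Fan.IsLimit.fac hl _ (equivShrink _ g)).trans (Equiv.symm_apply_apply _ g)⟩⟩

variable [Injective Q] (hQ : IsCoseparator Q)
  (hd : HomDominates ((singleFunctor A 0).obj C) ((singleFunctor A 0).obj Q) l)
include hQ hd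

lemma isZero_homology_of_homVanishes
    (hX : ∀ j : ℤ, -i ≤ j → j < l - i → HomVanishes ((singleFunctor A 0).obj C) X j) :
    IsZero ((homologyFunctor A i).obj X) := by
  rw [← isZero_homology_shift_iff (add_zero i), IsZero.iff_id_eq_zero]
  refine hQ.def _ _ fun α => ?_
  have hXQ : HomVanishes ((singleFunctor A 0).obj Q) (X⟦i⟧) 0 := hd _ fun j h₀ hl =>
    (homVanishes_shift_iff (sub_add_cancel j i)).2 (hX _ (by lia) (by lia))
  let e := (singleFunctorCompHomologyFunctorIso A 0).app Q
  obtain ⟨f, hf⟩ := (homologyFunctor_map_singleFunctor_bijective _).surjective (α ≫ e.inv)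
  rw [homVanishes_zero_iff.1 hXQ f] at hf
  rw [id_comp, zero_comp, ← cancel_mono e.inv, zero_comp]
  exact hf.symm.trans (Functor.map_zero _ _ _)

lemma isZero_of_homVanishes (h : ∀ i, HomVanishes ((singleFunctor A 0).obj C) X i) : IsZero X :=
  isZero_of_isZero_homology fun _ => isZero_homology_of_homVanishes hQ hd fun j _ _ => h j

lemma hasHeartApproximations_singleFunctor [EnoughInjectives A]
    (hC : HasInjectiveDimensionLT C (n + 1))
    (hE : HasHeartPreenvelopes ((singleFunctor A 0).obj C)) :
    HasHeartApproximations ((singleFunctor A 0).obj C) := fun F hF => by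
  -- Iterated preenvelopes push the unwanted cohomology of `F` above degree `n + l`, where
  -- truncation removes it.
  obtain ⟨Y, q, hY, hq⟩ := hE.exists_isLocal hF (n + l)
  obtain ⟨T, U, hT, hU, p, g, δ, hTri⟩ := TStructure.t.exists_triangle Y (l : ℤ) (l + 1) rfl
  have : T.IsLE l := ⟨hT⟩
  have : U.IsGE (l + 1) := ⟨hU⟩
  have hHT {j : ℤ} (hj : l < j) : IsZero ((homologyFunctor A j).obj T) := isZero_of_isLE T l j hj
  have hHU {j : ℤ} (hj : j ≤ n + l) : IsZero ((homologyFunctor A j).obj U) := by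
    obtain hjl | hjl := lt_or_ge j (l + 1)
    · exact isZero_of_isGE U (l + 1) j hjl
    · have hHY : IsZero ((homologyFunctor A j).obj Y) :=
        isZero_homology_of_homVanishes hQ hd fun i _ _ => hY i (by lia) (by push_cast; lia)
      exact (HomologySequence.exact₃ _ hTri j (j + 1) rfl).isZero_X₂
        (hHY.eq_of_src _ _) ((hHT (by lia)).eq_of_tgt _ _)
  have hUC {i : ℤ} (hi : -l ≤ i) : HomVanishes ((singleFunctor A 0).obj C) U i :=
    homVanishes_singleFunctor hC fun j _ _ => hHU (by lia)
  have hTC : heart ((singleFunctor A 0).obj C) T := fun i hi => by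
    obtain hil | hil := lt_or_ge i (-l)
    · exact homVanishes_singleFunctor hC fun j _ _ => hHT (by lia)
    · exact (hY i hi (by push_cast; lia)).obj₁ hTri (hUC (by lia))
  exact ⟨T, p ≫ q, hTC, MorphismProperty.comp_mem _ _ _
    (isLocal_mor₁_of_homVanishes hTri (hUC (by lia)) (hUC (by lia))) hq⟩

end Homology

section ExactSequences

variable {A : Type u} [Category.{v} A] [Abelian A]

lemma kernel_ι_comp_lift {X Y Z : A} {f : X ⟶ Y} {g : Y ⟶ Z} (w : f ≫ g = 0) :
    kernel.ι f ≫ kernel.lift g f w = 0 := by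
  simp [← cancel_mono (kernel.ι g)]

lemma shortExact_kernel_lift {X Y Z : A} {f : X ⟶ Y} {g : Y ⟶ Z} (w : f ≫ g = 0)
    (h : (ShortComplex.mk f g w).Exact) :
    (ShortComplex.mk (kernel.ι f) (kernel.lift g f w) (kernel_ι_comp_lift w)).ShortExact := by
  have : Epi (kernel.lift g f w) := h.epi_kernelLift
  let φ : ShortComplex.mk (kernel.ι f) (kernel.lift g f w) (kernel_ι_comp_lift w) ⟶
      ShortComplex.mk (kernel.ι f) f (kernel.condition f) :=
    { τ₁ := 𝟙 _, τ₂ := 𝟙 _, τ₃ := kernel.ι g }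
  have : Mono φ.τ₃ := inferInstanceAs (Mono (kernel.ι g))
  have : IsIso φ.τ₂ := inferInstanceAs (IsIso (𝟙 X))
  have : Epi φ.τ₁ := inferInstanceAs (Epi (𝟙 (kernel f)))
  exact { exact := (ShortComplex.exact_iff_of_epi_of_isIso_of_mono φ).2
            (ShortComplex.exact_kernel f) }

variable {m : ℕ} (S : ComposableArrows A m)

/-- The cycles of a sequence at the index `i`. -/
noncomputable def cycles (i : ℕ) (hi : i < m := by lia) : A := kernel (S.map' i (i + 1))

variable {S}

/-- The short exact sequence through the object of index `i` into which an exact sequence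
splits. -/
noncomputable abbrev cyclesShortComplex (hS : S.Exact) (i : ℕ) (hi : i + 1 < m := by lia) :
    ShortComplex A where
  X₁ := cycles S i
  X₂ := S.obj ⟨i, by lia⟩
  X₃ := cycles S (i + 1)
  f := kernel.ι _
  g := kernel.lift _ (S.map' i (i + 1)) (hS.zero i)
  zero := kernel_ι_comp_lift _

lemma cyclesShortComplex_shortExact (hS : S.Exact) (i : ℕ) (hi : i + 1 < m := by lia) :
    (cyclesShortComplex hS i).ShortExact :=
  shortExact_kernel_lift _ (hS.exact i)

lemma isZero_cycles_one (hS : S.Exact) (h₀ : IsZero (S.obj ⟨0, by lia⟩)) (hm : 1 < m) :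
    IsZero (cycles S 1) :=
  have := (cyclesShortComplex_shortExact hS 0).epi_g
  IsZero.of_epi (cyclesShortComplex hS 0 hm).g h₀

lemma nonempty_cycles_last_iso {S : ComposableArrows A (m + 1)}
    (h : IsZero (S.obj (Fin.last (m + 1)))) :
    Nonempty (cycles S m ≅ S.obj ⟨m, by lia⟩) :=
  ⟨kernelIsoOfEq (h.eq_of_tgt _ 0) ≪≫ kernelZeroIsoSource⟩

theorem hasInjectiveDimensionLT_of_exact {n : ℕ} {S : ComposableArrows A (n + 3)} (hS : S.Exact)
    (h₀ : IsZero (S.obj 0)) (hl : IsZero (S.obj (Fin.last (n + 3))))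
    (hI : ∀ (i : ℕ) (_ : 2 ≤ i) (_ : i ≤ n + 2), Injective (S.obj ⟨i, by lia⟩)) :
    HasInjectiveDimensionLT (S.obj ⟨1, by lia⟩) (n + 1) := by
  have cycles_dim : ∀ (k i : ℕ) (_ : 2 ≤ i) (_ : i + k = n + 2),
      HasInjectiveDimensionLT (cycles S i) (k + 1) := fun k => by
    induction k with
    | zero =>
      intro i h₂ hi
      obtain rfl : i = n + 2 := hi
      obtain ⟨e⟩ := nonempty_cycles_last_iso hl
      exact injective_iff_hasInjectiveDimensionLT_one.1
        (Injective.of_iso e.symm (hI _ le_add_self le_rfl))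
    | succ k ih =>
      intro i h₂ hik
      exact ((cyclesShortComplex_shortExact hS i).hasInjectiveDimensionLT_X₃_iff k
        (hI i h₂ (by lia))).1 (ih (i + 1) (by lia) (by lia))
  let g : S.obj ⟨1, by lia⟩ ⟶ cycles S 2 := (cyclesShortComplex hS 1).g
  have : IsIso g := (cyclesShortComplex_shortExact hS 1).isIso_g_iff.2
    (isZero_cycles_one hS h₀ (by lia))
  have := cycles_dim n 2 le_rfl (add_comm _ _)
  exact hasInjectiveDimensionLT_of_iso (asIso g).symm _

theorem homDominates_of_exact [HasDerivedCategory.{w} A] {c : DerivedCategory A} {r : ℕ}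
    {S : ComposableArrows A (r + 3)} (hS : S.Exact) (h₀ : IsZero (S.obj 0))
    (hl : IsZero (S.obj (Fin.last (r + 3))))
    (hc : ∀ (i : ℕ) (_ : 1 ≤ i) (_ : i ≤ r + 1),
      HomDominates c ((singleFunctor A 0).obj (S.obj ⟨i, by lia⟩)) 1) :
    HomDominates c ((singleFunctor A 0).obj (S.obj ⟨r + 2, by lia⟩)) (r + 1) := by
  have cycles_dominated : ∀ (i : ℕ) (_ : i ≤ r + 1),
      HomDominates c ((singleFunctor A 0).obj (cycles S (i + 1))) i := fun i => by
    induction i with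
    | zero =>
      exact fun _ => .of_isZero ((singleFunctor A 0).map_isZero (isZero_cycles_one hS h₀ (by lia)))
    | succ i ih =>
      exact fun hi => .obj₃ (cyclesShortComplex_shortExact hS (i + 1)).singleTriangle_distinguished
        (ih (by lia)) (hc (i + 1) (by lia) hi)
  obtain ⟨e⟩ := nonempty_cycles_last_iso hl
  exact (cycles_dominated (r + 1) le_rfl).of_retract (e.symm.retract.map (singleFunctor A 0))

end ExactSequences

section Retracts

variable {B : Type*} [Category* B]

lemma mono_of_isCoseparator {X Y G : B} (hG : IsCoseparator G) (u : X ⟶ Y)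
    (h : ∀ g : X ⟶ G, ∃ e : Y ⟶ G, u ≫ e = g) : Mono u where
  right_cancellation f g hfg := hG.def _ _ fun k => by
    obtain ⟨e, rfl⟩ := h k
    rw [reassoc_of% hfg]

lemma injective_of_isLimit_fan {ι : Type*} {F : ι → B} {P : B} {p : ∀ a, P ⟶ F a}
    (h : IsLimit (Fan.mk P p)) [∀ a, Injective (F a)] : Injective P :=
  have : HasProduct F := ⟨⟨_, h⟩⟩
  Injective.of_iso ((limit.isLimit _).conePointUniqueUpToIso h) (inferInstanceAs (Injective (∏ᶜ F)))

lemma exists_retract_of_retract_obj {A : Type*} [Category* A] [IsIdempotentComplete A] (F : A ⥤ B)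
    [F.Full] [F.Faithful] {X : B} {Y : A} (r : Retract X (F.obj Y)) :
    ∃ M, Nonempty (Retract M Y) ∧ Nonempty (X ≅ F.obj M) := by
  obtain ⟨p, hp⟩ := F.map_surjective (r.r ≫ r.i)
  obtain ⟨M, i, q, hiq, hqi⟩ := IsIdempotentComplete.idempotents_split _ p
    (F.map_injective (by simp [hp]))
  refine ⟨M, ⟨⟨i, q, hiq⟩⟩, ⟨⟨r.i ≫ F.map q, F.map i ≫ r.r, ?_, ?_⟩⟩⟩
  · simp [← F.map_comp_assoc, hqi, hp]
  · have : F.map i ≫ F.map p ≫ F.map q = 𝟙 _ := by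
      rw [← F.map_comp, ← F.map_comp, ← hqi, assoc, hiq, comp_id, hiq, F.map_id]
    simpa [hp] using this

end Retracts

section Cotilting

variable {A : Type u} [Category.{v} A] [Abelian A] [HasProducts.{v} A]

/-- The direct summands of powers of `C`, the class `Prod C`. -/
def retractsOfPowers (C : A) : ObjectProperty A := fun M =>
  ∃ ι : Type v, Nonempty (Retract M (∏ᶜ fun _ : ι => C))

/-- Big cotilting objects of an abelian category with products: those of finite injective
dimension, with no self-extensions of powers, and from which an injective cogenerator has a finite
resolution `0 → C_r → ⋯ → C_0 → Q → 0` by direct summands of powers. The resolution is encoded as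
an exact sequence including its two zero ends, so that `Q` has index `r + 2`. -/
structure IsCotilting [HasExt.{e} A] (C : A) : Prop where
  exists_hasInjectiveDimensionLT : ∃ n : ℕ, HasInjectiveDimensionLT C (n + 1)
  subsingleton_ext : ∀ (ι : Type v) (j : ℕ), 0 < j →
    Subsingleton (Abelian.Ext (∏ᶜ fun _ : ι => C) C j)
  exists_resolution : ∃ (r : ℕ) (S : ComposableArrows A (r + 3)),
    S.Exact ∧ IsZero (S.obj 0) ∧ IsZero (S.obj (Fin.last (r + 3))) ∧
    (∀ (i : ℕ) (_ : 1 ≤ i) (_ : i ≤ r + 1), retractsOfPowers C (S.obj ⟨i, by lia⟩)) ∧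
    Injective (S.obj ⟨r + 2, by lia⟩) ∧ IsCoseparator (S.obj ⟨r + 2, by lia⟩)

namespace IsCotilting

variable [EnoughInjectives A] [HasDerivedCategory.{w} A] [HasExt.{e} A] {C : A}
  (hC : IsCotilting C)
include hC

lemma heart_pow (ι : Type v) : heart ((singleFunctor A 0).obj C)
    ((singleFunctor A 0).obj (∏ᶜ fun _ : ι => C)) := by
  obtain ⟨n, hn⟩ := hC.exists_hasInjectiveDimensionLT
  exact heart_singleFunctor hn (hC.subsingleton_ext ι)

lemma heart_self : heart ((singleFunctor A 0).obj C) ((singleFunctor A 0).obj C) := fun i hi =>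
  let r : Retract C (∏ᶜ fun _ : PUnit => C) := ⟨Pi.lift fun _ => 𝟙 C, Pi.π _ PUnit.unit, by simp⟩
  (hC.heart_pow PUnit i hi).of_retract (r.map (singleFunctor A 0))

variable [AB4Star A]

lemma exists_homDominates : ∃ (Q : A) (l : ℕ), Injective Q ∧ IsCoseparator Q ∧
    HomDominates ((singleFunctor A 0).obj C) ((singleFunctor A 0).obj Q) l := by
  obtain ⟨n, hn⟩ := hC.exists_hasInjectiveDimensionLT
  obtain ⟨r, S, hS, h₀, hl, hprod, hinj, hcos⟩ := hC.exists_resolution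
  refine ⟨_, r + 1, hinj, hcos, homDominates_of_exact hS h₀ hl fun i h₁ hi => ?_⟩
  obtain ⟨ι, ⟨ρ⟩⟩ := hprod i h₁ hi
  obtain ⟨hlim⟩ := nonempty_isLimit_fan_singleFunctor ι hn
  exact (HomDominates.of_isLimit_fan hlim).of_retract (ρ.map (singleFunctor A 0))

lemma hasHeartPreenvelopes : HasHeartPreenvelopes ((singleFunctor A 0).obj C) := fun X => by
  obtain ⟨n, hn⟩ := hC.exists_hasInjectiveDimensionLT
  obtain ⟨ι, u, hu⟩ := exists_hom_singleFunctor_pow hn X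
  exact ⟨_, u, hC.heart_pow ι, hu⟩

lemma hasHeartApproximations : HasHeartApproximations ((singleFunctor A 0).obj C) := by
  obtain ⟨n, hn⟩ := hC.exists_hasInjectiveDimensionLT
  obtain ⟨Q, l, _, hQ, hl⟩ := hC.exists_homDominates
  exact hasHeartApproximations_singleFunctor hQ hl hn hC.hasHeartPreenvelopes

lemma injective :
    Injective (⟨_, hC.heart_self⟩ : (heart ((singleFunctor A 0).obj C)).FullSubcategory) :=
  hC.hasHeartApproximations.injective hC.heart_self

lemma isCoseparator :
    IsCoseparator (⟨_, hC.heart_self⟩ : (heart ((singleFunctor A 0).obj C)).FullSubcategory) := by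
  obtain ⟨Q, l, _, hQ, hl⟩ := hC.exists_homDominates
  exact hC.hasHeartApproximations.isCoseparator (fun _ => isZero_of_homVanishes hQ hl)
    hC.heart_self

lemma injective_pow (ι : Type v) :
    Injective (⟨_, hC.heart_pow ι⟩ : (heart ((singleFunctor A 0).obj C)).FullSubcategory) := by
  obtain ⟨n, hn⟩ := hC.exists_hasInjectiveDimensionLT
  obtain ⟨hlim⟩ := nonempty_isLimit_fan_singleFunctor ι hn
  have := hC.injective
  exact injective_of_isLimit_fan (isLimitOfIsLimitFanMkObj (heart ((singleFunctor A 0).obj C)).ι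
    (P := ⟨_, hC.heart_pow ι⟩) (fun _ : ι => ⟨_, hC.heart_self⟩)
    (fun a => ObjectProperty.homMk ((singleFunctor A 0).map (Pi.π _ a))) hlim)

lemma exists_retract_pow {W : (heart ((singleFunctor A 0).obj C)).FullSubcategory}
    (hW : Injective W) :
    ∃ ι : Type v, Nonempty (Retract W.obj ((singleFunctor A 0).obj (∏ᶜ fun _ : ι => C))) := by
  obtain ⟨n, hn⟩ := hC.exists_hasInjectiveDimensionLT
  obtain ⟨ι, u, hu⟩ := exists_hom_singleFunctor_pow hn W.obj
  let u' : W ⟶ ⟨_, hC.heart_pow ι⟩ := ObjectProperty.homMk u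
  have : Mono u' := mono_of_isCoseparator hC.isCoseparator u' fun g => by
    obtain ⟨e, he⟩ := hu g.hom
    exact ⟨ObjectProperty.homMk e, ObjectProperty.hom_ext _ he⟩
  let r : Retract W ⟨_, hC.heart_pow ι⟩ :=
    ⟨u', Injective.factorThru (𝟙 W) u', Injective.comp_factorThru _ _⟩
  exact ⟨ι, ⟨r.map (heart ((singleFunctor A 0).obj C)).ι⟩⟩

lemma injective_iff (W : (heart ((singleFunctor A 0).obj C)).FullSubcategory) :
    Injective W ↔
      ∃ M, retractsOfPowers C M ∧ Nonempty (W.obj ≅ (singleFunctor A 0).obj M) := by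
  refine ⟨fun hW => ?_, fun ⟨M, ⟨ι, ⟨r⟩⟩, ⟨i⟩⟩ => ?_⟩
  · obtain ⟨ι, ⟨r⟩⟩ := hC.exists_retract_pow hW
    obtain ⟨M, hM, hWM⟩ := exists_retract_of_retract_obj (singleFunctor A 0) r
    exact ⟨M, ⟨ι, hM⟩, hWM⟩
  · have := hC.injective_pow ι
    let ρ := i.retract.trans (r.map (singleFunctor A 0))
    exact Retract.injective (Y := ⟨_, hC.heart_pow ι⟩) ⟨ObjectProperty.homMk ρ.i,
      ObjectProperty.homMk ρ.r, ObjectProperty.hom_ext _ ρ.retract⟩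

end IsCotilting

end Cotilting

section Modules

variable {R : Type v} [Ring R] {C : ModuleCat.{v} R}

lemma inProdOf_iff {M : ModuleCat.{v} R} : InProdOf C M ↔ retractsOfPowers C M :=
  exists_congr fun _ => ⟨fun ⟨s, r, h⟩ => ⟨⟨s, r, h⟩⟩, fun ⟨ρ⟩ => ⟨ρ.i, ρ.r, ρ.retract⟩⟩

lemma hasInjectiveDimensionLT_of_injDimLE {n : ℕ} (h : InjDimLE C n) :
    HasInjectiveDimensionLT C (n + 1) := by
  obtain ⟨S, hS, h₀, hl, ⟨i⟩, hI⟩ := h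
  have := hasInjectiveDimensionLT_of_exact hS h₀ hl hI
  exact hasInjectiveDimensionLT_of_iso i _

lemma isCotilting_of_isBigCotilting [HasExt.{e} (ModuleCat.{v} R)] (hC : IsBigCotilting C) :
    IsCotilting C := by
  obtain ⟨n, hn, hext, hres⟩ := hC
  simp only [inProdOf_iff] at hres
  exact ⟨⟨n, hasInjectiveDimensionLT_of_injDimLE hn⟩, hext, hres⟩

variable [HasDerivedCategory.{w} (ModuleCat.{v} R)] {W : DerivedCategory (ModuleCat.{v} R)}

lemma heartMono_iff {X Y : (heart ((singleFunctor (ModuleCat.{v} R) 0).obj C)).FullSubcategory}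
    (f : X ⟶ Y) : HeartMono C f.hom ↔ Mono f :=
  ⟨fun h => ⟨fun {Z} g k hgk => ObjectProperty.hom_ext _
    (h.2.2 Z.obj Z.2 g.hom k.hom (congr_arg (·.hom) hgk))⟩,
    fun _ => ⟨X.2, Y.2, fun Z hZ g k hgk => congr_arg (·.hom) ((cancel_mono f).1
      (ObjectProperty.hom_ext _ hgk :
        (ObjectProperty.homMk g : ⟨Z, hZ⟩ ⟶ X) ≫ f = ObjectProperty.homMk k ≫ f))⟩⟩

lemma heartInjective_iff (hW : InHeart C W) : HeartInjective C W ↔ Injective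
    (⟨W, hW⟩ : (heart ((singleFunctor (ModuleCat.{v} R) 0).obj C)).FullSubcategory) :=
  ⟨fun h => ⟨fun g f hf => (h.2 f.hom ((heartMono_iff f).2 hf) g.hom).imp' ObjectProperty.homMk
    fun _ => ObjectProperty.hom_ext _⟩,
    fun h => ⟨hW, fun X Y f hf g => by
      let f' : (⟨X, hf.1⟩ : (heart _).FullSubcategory) ⟶ ⟨Y, hf.2.1⟩ := ObjectProperty.homMk f
      have := (heartMono_iff f').1 hf
      obtain ⟨k, hk⟩ := h.factors (ObjectProperty.homMk g) f'
      exact ⟨k.hom, congr_arg (·.hom) hk⟩⟩⟩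

lemma heartCogen_of_isCoseparator {hW : InHeart C W} (h : IsCoseparator
    (⟨W, hW⟩ : (heart ((singleFunctor (ModuleCat.{v} R) 0).obj C)).FullSubcategory)) :
    HeartCogen C W := fun X Y hX hY f g hfg =>
  congr_arg (·.hom) (h.def (X := ⟨X, hX⟩) (Y := ⟨Y, hY⟩) (ObjectProperty.homMk f)
    (ObjectProperty.homMk g) fun k => ObjectProperty.hom_ext _ (hfg k.hom))

end Modules

end Cotilting

open Cotilting in
theorem statement18_general {A : Type u} [Category.{v} A] [Abelian A] [EnoughInjectives A]
    [HasProducts.{v} A] [AB4Star A] [HasExt.{e} A] [HasDerivedCategory.{w} A] {C : A}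
    (hC : IsCotilting C) :
    ∃ h : heart ((singleFunctor A 0).obj C) ((singleFunctor A 0).obj C),
      Injective (⟨_, h⟩ : (heart ((singleFunctor A 0).obj C)).FullSubcategory) ∧
      IsCoseparator (⟨_, h⟩ : (heart ((singleFunctor A 0).obj C)).FullSubcategory) ∧
      ∀ W : (heart ((singleFunctor A 0).obj C)).FullSubcategory, Injective W ↔
        ∃ M, retractsOfPowers C M ∧ Nonempty (W.obj ≅ (singleFunctor A 0).obj M) :=
  ⟨hC.heart_self, hC.injective, hC.isCoseparator, hC.injective_iff⟩

theorem statement18 (R : Type v) [Ring R] [HasExt.{e} (ModuleCat.{v} R)]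
    [HasDerivedCategory.{w} (ModuleCat.{v} R)]
    (C : ModuleCat.{v} R) (hC : IsBigCotilting C) :
    InHeart C ((singleFunctor (ModuleCat.{v} R) 0).obj C) ∧
    HeartInjective C ((singleFunctor (ModuleCat.{v} R) 0).obj C) ∧
    HeartCogen C ((singleFunctor (ModuleCat.{v} R) 0).obj C) ∧
    (∀ W : DerivedCategory (ModuleCat.{v} R), InHeart C W →
      (HeartInjective C W ↔
        ∃ M : ModuleCat.{v} R, InProdOf C M ∧
          Nonempty (W ≅ (singleFunctor (ModuleCat.{v} R) 0).obj M))) := by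
  obtain ⟨h, hinj, hcog, hW⟩ := statement18_general (Cotilting.isCotilting_of_isBigCotilting hC)
  simp only [Cotilting.inProdOf_iff]
  exact ⟨h, (Cotilting.heartInjective_iff h).2 hinj, Cotilting.heartCogen_of_isCoseparator hcog,
    fun W hWC => (Cotilting.heartInjective_iff hWC).trans (hW ⟨W, hWC⟩)⟩
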